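/- arXiv:2012.03771 — 6 statements merged into one kernel-verified Lean document; each statement's English description precedes it below -/
import Mathlib

section
/- Let P be a prime with P ≥ 3 and let K = P# be the primorial of P, and suppose neither K − 1 nor K + 1 is prime. If q and q' are primes with q < K < q' and there is no prime strictly between q and q', then q' − q ≥ 2P + 3. -/
/-!
Write `K` for the primorial of `n`. A number greater than `1` that is coprime to `K` has all its
prime factors, hence also itself, at least as large as the first prime after `n`. If `q` and `q'`
are primes with `q < K < q'`, then `q' - K` is coprime to `K`, and so is `K - q` unless `q ≤ n`;
neither difference is `1` because `K ± 1` are not prime. If `q ≤ n`, then `K - q` is large for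
another reason: `K - 1` is composite and coprime to `K`, so its least prime factor `r` satisfies
`n < r` and `r ^ 2 < K`. Hence `q' - q` is at least twice the first prime after `n`, which is at
least `n + 2` when `n` is an odd prime.
-/

theorem coprime_primorial_iff_lt {p n : ℕ} (hp : p.Prime) :
    p.Coprime (primorial n) ↔ n < p := by
  rw [hp.coprime_iff_not_dvd, hp.dvd_primorial_iff, not_le]

theorem lt_minFac_of_coprime_primorial {n m : ℕ} (hm : m ≠ 1) (hcop : m.Coprime (primorial n)) :
    n < m.minFac :=
  (coprime_primorial_iff_lt (Nat.minFac_prime hm)).1 (hcop.coprime_dvd_left m.minFac_dvd)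

theorem exists_prime_gt_le_of_coprime_primorial {n m : ℕ} (hm : 1 < m)
    (hcop : m.Coprime (primorial n)) : ∃ r, r.Prime ∧ n < r ∧ r ≤ m :=
  ⟨m.minFac, Nat.minFac_prime hm.ne', lt_minFac_of_coprime_primorial hm.ne' hcop,
    Nat.minFac_le (by lia)⟩

theorem exists_prime_gt_primorial_add_le {n m : ℕ} (hm : primorial n + 1 < m)
    (hcop : m.Coprime (primorial n)) : ∃ r, r.Prime ∧ n < r ∧ primorial n + r ≤ m := by
  have hsub : (m - primorial n).Coprime (primorial n) :=
    (Nat.coprime_sub_self_left (by lia)).2 hcop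
  obtain ⟨r, hr, hnr, hle⟩ := exists_prime_gt_le_of_coprime_primorial (by lia) hsub
  exact ⟨r, hr, hnr, by lia⟩

theorem exists_prime_gt_add_le_primorial_of_coprime {n m : ℕ} (hm : m + 1 < primorial n)
    (hcop : m.Coprime (primorial n)) : ∃ r, r.Prime ∧ n < r ∧ m + r ≤ primorial n := by
  have hsub : (primorial n - m).Coprime (primorial n) :=
    (Nat.coprime_self_sub_left (by lia)).2 hcop
  obtain ⟨r, hr, hnr, hle⟩ := exists_prime_gt_le_of_coprime_primorial (by lia) hsub
  exact ⟨r, hr, hnr, by lia⟩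

theorem exists_prime_gt_add_lt_primorial {n : ℕ} (hK : 2 < primorial n)
    (hdn : ¬ (primorial n - 1).Prime) : ∃ r, r.Prime ∧ n < r ∧ n + r < primorial n := by
  have hcop : (primorial n - 1).Coprime (primorial n) :=
    (Nat.coprime_self_sub_left (by lia)).2 (Nat.coprime_one_left _)
  set r := (primorial n - 1).minFac
  have hr : r.Prime := Nat.minFac_prime (by lia)
  have hnr : n < r := lt_minFac_of_coprime_primorial (by lia) hcop
  have hsq : r ^ 2 ≤ primorial n - 1 := Nat.minFac_sq_le_self (by lia) hdn
  refine ⟨r, hr, hnr, ?_⟩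
  calc n + r < r * 2 := by lia
    _ ≤ r ^ 2 := by rw [sq]; exact Nat.mul_le_mul_left r hr.two_le
    _ < primorial n := by lia

theorem exists_prime_gt_add_le_primorial {n q : ℕ} (hq : q.Prime) (hqK : q < primorial n)
    (hdn : ¬ (primorial n - 1).Prime) : ∃ r, r.Prime ∧ n < r ∧ q + r ≤ primorial n := by
  rcases le_or_gt q n with hqn | hnq
  · obtain ⟨r, hr, hnr, hlt⟩ := exists_prime_gt_add_lt_primorial (hq.two_le.trans_lt hqK) hdn
    exact ⟨r, hr, hnr, by lia⟩
  · have hne : q ≠ primorial n - 1 := fun h ↦ hdn (h ▸ hq)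
    exact exists_prime_gt_add_le_primorial_of_coprime (by lia) ((coprime_primorial_iff_lt hq).2 hnq)

theorem primorial_gap_ge_general {n q q' : ℕ} (hdn : ¬ (primorial n - 1).Prime)
    (hup : ¬ (primorial n + 1).Prime) (hq : q.Prime) (hq' : q'.Prime)
    (hqK : q < primorial n) (hKq' : primorial n < q') :
    ∃ r, r.Prime ∧ n < r ∧ 2 * r ≤ q' - q := by
  have hcop : q'.Coprime (primorial n) :=
    (coprime_primorial_iff_lt hq').2 (le_primorial_self.trans_lt hKq')
  have hne : q' ≠ primorial n + 1 := fun h ↦ hup (h ▸ hq')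
  obtain ⟨r, hr, hnr, hlower⟩ := exists_prime_gt_add_le_primorial hq hqK hdn
  obtain ⟨s, hs, hns, hupper⟩ := exists_prime_gt_primorial_add_le (by lia) hcop
  rcases le_total r s with hrs | hsr
  · exact ⟨r, hr, hnr, by lia⟩
  · exact ⟨s, hs, hns, by lia⟩

theorem add_two_le_of_prime_of_prime_of_lt {p r : ℕ} (hp : p.Prime) (hr : r.Prime)
    (hp2 : p ≠ 2) (hpr : p < r) : p + 2 ≤ r := by
  have hp_odd : Odd p := hp.odd_of_ne_two hp2
  have hr_odd : Odd r := hr.odd_of_ne_two (hp.two_le.trans_lt hpr).ne'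
  grind

/-- Let `P ≥ 3` be a prime, `K = P#` the primorial of `P`, and suppose neither `K - 1`
nor `K + 1` is prime. If `q` and `q'` are primes with `q < K < q'` and there is no prime
strictly between `q` and `q'`, then `q' - q ≥ 2 * P + 3`. -/
theorem primorial_gap_ge (P : ℕ) (hP : P.Prime) (hP3 : 3 ≤ P)
    (hdn : ¬ (primorial P - 1).Prime) (hup : ¬ (primorial P + 1).Prime)
    (q q' : ℕ) (hq : q.Prime) (hq' : q'.Prime)
    (h1 : q < primorial P) (h2 : primorial P < q')
    (hno : ∀ r : ℕ, q < r → r < q' → ¬ r.Prime) :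
    2 * P + 3 ≤ q' - q := by
  obtain ⟨r, hr, hPr, hgap⟩ := primorial_gap_ge_general hdn hup hq hq' h1 h2
  have hPr2 : P + 2 ≤ r := add_two_le_of_prime_of_prime_of_lt hP hr (by lia) hPr
  lia
end

section
/- Let P be a prime with P ≥ 3 and let K = P#/2, where P# is the primorial of P. If x is an integer with 1 ≤ x ≤ 2P and K + x is prime, then x = 2^k for some integer k ≥ 1. -/
/-!
With `K = P# / 2`, parity forces `x` to be even, because `K` is odd and `K + x > 2` is prime.
An odd prime `q ∣ x` would then give `2 * q ∣ x ≤ 2 * P`, so `q ≤ P` and `q ∣ K`; but a prime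
`K + x` makes `K` and `x` coprime. So `x` has no odd prime factor.
-/

section Arithmetic

variable {m n x K N q : ℕ}

theorem coprime_of_prime_add (hm : m ≠ 0) (hn : n ≠ 0) (hp : (m + n).Prime) : m.Coprime n := by
  have hm_lt : m < m + n := by lia
  exact Nat.coprime_self_add_right.1 (Nat.coprime_of_lt_prime hm hm_lt hp).symm

theorem eq_two_pow_or_exists_odd_prime_two_mul_dvd (hx : Even x) :
    (∃ k, 1 ≤ k ∧ x = 2 ^ k) ∨ ∃ q, q.Prime ∧ Odd q ∧ 2 * q ∣ x := by
  rcases x.eq_two_pow_or_exists_odd_prime_and_dvd with ⟨k, rfl⟩ | ⟨q, hq, hqx, hodd⟩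
  · have hk : k ≠ 0 := (Nat.even_pow.1 hx).2
    exact .inl ⟨k, Nat.one_le_iff_ne_zero.2 hk, rfl⟩
  · exact .inr ⟨q, hq, hodd, hodd.coprime_two_left.mul_dvd_of_dvd_of_dvd hx.two_dvd hqx⟩

theorem eq_two_pow_of_prime_add (hK : Odd K) (hK1 : K ≠ 1)
    (hdvd : ∀ q, q.Prime → Odd q → q ≤ N → q ∣ K)
    (hx : x ≠ 0) (hxN : x ≤ 2 * N) (hp : (K + x).Prime) : ∃ k, 1 ≤ k ∧ x = 2 ^ k := by
  have hsum_odd : Odd (K + x) := hp.odd_of_ne_two (by have := hK.pos; lia)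
  have hx_even : Even x := (Nat.odd_add.1 hsum_odd).1 hK
  refine (eq_two_pow_or_exists_odd_prime_two_mul_dvd hx_even).resolve_right ?_
  rintro ⟨q, hq, hq_odd, h2q⟩
  have hqN : q ≤ N := by have := Nat.le_of_dvd (Nat.pos_of_ne_zero hx) h2q; lia
  have hKx : K.Coprime x := coprime_of_prime_add hK.pos.ne' hx hp
  exact Nat.not_coprime_of_dvd_of_dvd hq.one_lt (hdvd q hq hq_odd hqN)
    (dvd_of_mul_left_dvd h2q) hKx

theorem odd_div_two_of_squarefree (hm : Squarefree m) (heven : Even m) : Odd (m / 2) := by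
  rw [← Nat.two_mul_div_two_of_even heven] at hm
  exact Nat.coprime_two_left.1 (Nat.coprime_of_squarefree_mul hm)

theorem odd_primorial_div_two (hn : 2 ≤ n) : Odd (primorial n / 2) :=
  odd_div_two_of_squarefree (squarefree_primorial n)
    (even_iff_two_dvd.2 (Nat.prime_two.dvd_primorial_iff.2 hn))

theorem dvd_primorial_div_two (hq : q.Prime) (hodd : Odd q) (hqn : q ≤ n) :
    q ∣ primorial n / 2 := by
  have h2 : 2 ∣ primorial n := Nat.prime_two.dvd_primorial_iff.2 (hq.two_le.trans hqn)
  have hq_dvd : q ∣ primorial n := hq.dvd_primorial_iff.2 hqn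
  exact Nat.dvd_div_of_mul_dvd (hodd.coprime_two_left.mul_dvd_of_dvd_of_dvd h2 hq_dvd)

end Arithmetic

theorem primorial_div_two_prime_offset_pow_two_general (P : ℕ) (hP3 : 3 ≤ P)
    (x : ℕ) (hx1 : 1 ≤ x) (hx2 : x ≤ 2 * P)
    (hprime : (primorial P / 2 + x).Prime) :
    ∃ k : ℕ, 1 ≤ k ∧ x = 2 ^ k := by
  have hK_odd : Odd (primorial P / 2) := odd_primorial_div_two (by lia)
  have h3 : 3 ∣ primorial P / 2 := dvd_primorial_div_two Nat.prime_three (by decide) hP3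
  have hK_ne_one : primorial P / 2 ≠ 1 := by lia
  exact eq_two_pow_of_prime_add hK_odd hK_ne_one (fun _ => dvd_primorial_div_two)
    (Nat.one_le_iff_ne_zero.1 hx1) hx2 hprime

/-- Let `P ≥ 3` be a prime and `K = P# / 2`. If `x` is an integer with `1 ≤ x ≤ 2 * P`
and `K + x` is prime, then `x = 2 ^ k` for some integer `k ≥ 1`. -/
theorem primorial_div_two_prime_offset_pow_two (P : ℕ) (hP : P.Prime) (hP3 : 3 ≤ P)
    (x : ℕ) (hx1 : 1 ≤ x) (hx2 : x ≤ 2 * P)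
    (hprime : (primorial P / 2 + x).Prime) :
    ∃ k : ℕ, 1 ≤ k ∧ x = 2 ^ k :=
  primorial_div_two_prime_offset_pow_two_general P hP3 x hx1 hx2 hprime
end

section
/- Let p, K be coprime integers with 1 ≤ K < p, and let L, R be integers with 0 ≤ L ≤ R < p such that no multiple of K lies in the interval [L, R]. Suppose m is a positive integer with L ≤ (m·K) mod p ≤ R, and set i = ⌊m·K / p⌋. Then i ≥ 1 and L mod K ≤ (−p·i) mod K ≤ R mod K. -/
/-! Put `i = m * K / p` and let `v = m * K - p * i` be the residue of `m * K` modulo `p`. If `i`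
were `0`, then `v = m * K` would be a multiple of `K` in `[L, R]`. Modulo `K`, the residue `v` is
congruent to `-(p * i)`, and reduction modulo `K` is monotone along `L ≤ v ≤ R` because it drops
only at multiples of `K`. -/

theorem emod_le_self {a : ℤ} (ha : 0 ≤ a) (k : ℤ) : a % k ≤ a := by
  rw [← Int.emod_abs, Int.emod_def]
  exact sub_le_self a (mul_nonneg (abs_nonneg k) (Int.ediv_nonneg ha (abs_nonneg k)))

theorem emod_le_emod_of_forall_not_dvd {a b k : ℤ} (hk : k ≠ 0) (hab : a ≤ b)
    (h : ∀ x ∈ Set.Ioc a b, ¬ k ∣ x) : a % k ≤ b % k := by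
  have hle_b : k * (b / k) ≤ b := Int.mul_ediv_self_le hk
  have hle_a : k * (b / k) ≤ a := by
    by_contra! hlt
    exact h _ ⟨hlt, hle_b⟩ (dvd_mul_right k (b / k))
  calc a % k = (a - k * (b / k)) % k := (Int.sub_mul_emod_self_left a k (b / k)).symm
    _ ≤ a - k * (b / k) := emod_le_self (sub_nonneg.2 hle_a) k
    _ ≤ b - k * (b / k) := sub_le_sub_right hab _
    _ = b % k := (Int.emod_def b k).symm

theorem neg_mul_ediv_modEq_emod {a k : ℤ} (p : ℤ) (h : k ∣ a) :
    -(p * (a / p)) ≡ a % p [ZMOD k] := by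
  rw [Int.modEq_iff_dvd, sub_neg_eq_add, Int.emod_add_mul_ediv]
  exact h

theorem case_e_forward_general {p K L R m : ℤ} (hp : 0 < p) (hK : 0 < K) (hm : 0 ≤ m)
    (hnomult : ¬ ∃ j : ℤ, L ≤ j * K ∧ j * K ≤ R)
    (hLv : L ≤ (m * K) % p) (hvR : (m * K) % p ≤ R) :
    1 ≤ m * K / p ∧ L % K ≤ (-(p * (m * K / p))) % K ∧ (-(p * (m * K / p))) % K ≤ R % K := by
  have hndvd : ∀ x, L ≤ x → x ≤ R → ¬ K ∣ x := by
    rintro _ hLx hxR ⟨j, rfl⟩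
    exact hnomult ⟨j, by rwa [mul_comm], by rwa [mul_comm]⟩
  have hpmK : p ≤ m * K := by
    by_contra! hlt
    have hv : m * K % p = m * K := Int.emod_eq_of_lt (by positivity) hlt
    exact hndvd _ hLv hvR (hv.symm ▸ dvd_mul_left K m)
  have hcongr : -(p * (m * K / p)) % K = m * K % p % K :=
    neg_mul_ediv_modEq_emod p (dvd_mul_left K m)
  rw [hcongr]
  refine ⟨(Int.le_ediv_iff_mul_le hp).2 (by rwa [one_mul]), ?_, ?_⟩
  · exact emod_le_emod_of_forall_not_dvd hK.ne' hLv
      fun x hx ↦ hndvd x hx.1.le (hx.2.trans hvR)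
  · exact emod_le_emod_of_forall_not_dvd hK.ne' hvR
      fun x hx ↦ hndvd x (hLv.trans hx.1.le) hx.2

/-- Forward direction of case (e) of Equation 8: if `m > 0` solves `L ≤ (m*K) % p ≤ R`
and no multiple of `K` lies in `[L, R]`, then `i = ⌊m*K / p⌋ ≥ 1` solves the reduced
problem `L % K ≤ (-p*i) % K ≤ R % K`. -/
theorem case_e_forward (p K L R : ℤ) (hcop : IsCoprime p K) (hK1 : 1 ≤ K) (hKp : K < p)
    (hL : 0 ≤ L) (hLR : L ≤ R) (hR : R < p)
    (hnomult : ¬ ∃ j : ℤ, L ≤ j * K ∧ j * K ≤ R)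
    (m : ℤ) (hm : 0 < m) (h1 : L ≤ (m * K) % p) (h2 : (m * K) % p ≤ R) :
    1 ≤ m * K / p ∧ L % K ≤ (-(p * (m * K / p))) % K ∧ (-(p * (m * K / p))) % K ≤ R % K :=
  case_e_forward_general (by lia) hK1 hm.le hnomult h1 h2
end

section
/- Let p, K be coprime integers with 1 ≤ K < p, and let L, R be integers with 0 ≤ L ≤ R < p such that no multiple of K lies in the interval [L, R]. Suppose i is a nonnegative integer with L mod K ≤ (−p·i) mod K ≤ R mod K, and set m = ⌈(L + p·i)/K⌉. Then L ≤ m·K − i·p ≤ R, and consequently (m·K) mod p = m·K − i·p lies in [L, R]. -/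
/-!
Rounding `(L + p * i) / K` up and multiplying back by `K` overshoots `L + p * i` by the residue of
its negative, so `m * K - i * p = L + (-(p * i) - L) % K`: the least integer `≥ L` congruent to
`-(p * i)` modulo `K`. If the residue of `-(p * i)` is at least that of `L`, this excess over `L` is
the difference of the two residues, hence at most `R % K - L % K`. The latter is `R - L`, because
an interval without multiples of `K` stays inside one block `[q * K, (q + 1) * K)`.
-/

theorem sub_emod_of_emod_le_emod {a b k : ℤ} (h : a % k ≤ b % k) :
    (b - a) % k = b % k - a % k := by
  rcases eq_or_ne k 0 with rfl | hk
  · simp only [Int.emod_zero]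
  · have hlt : b % k - a % k < |k| :=
      (sub_le_self _ (Int.emod_nonneg a hk)).trans_lt (Int.emod_lt_abs b hk)
    rw [Int.sub_emod, ← Int.emod_abs, Int.emod_eq_of_lt (sub_nonneg.2 h) hlt]

theorem ediv_eq_ediv_of_not_exists_mul {a b k : ℤ} (hk : 0 < k) (hab : a ≤ b)
    (h : ¬ ∃ j : ℤ, a ≤ j * k ∧ j * k ≤ b) : a / k = b / k := by
  have hmul_lt : b / k * k < a := by
    by_contra! hle
    exact h ⟨b / k, hle, Int.ediv_mul_le b hk.ne'⟩
  exact le_antisymm (Int.ediv_le_ediv hk hab) ((Int.le_ediv_iff_mul_le hk).2 hmul_lt.le)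

section Ceil

variable {α : Type*} [Field α] [LinearOrder α] [IsStrictOrderedRing α] [FloorRing α]

theorem ceil_intCast_div_intCast (n : ℤ) {k : ℤ} (hk : 0 ≤ k) :
    ⌈(n : α) / k⌉ = -((-n) / k) := by
  lift k to ℕ using hk
  rw [← Rat.ceil_intCast_div_natCast, ← Rat.ceil_cast (α := α), Rat.cast_div, Rat.cast_intCast,
    Rat.cast_natCast, Int.cast_natCast]

theorem ceil_intCast_div_intCast_mul (n : ℤ) {k : ℤ} (hk : 0 ≤ k) :
    ⌈(n : α) / k⌉ * k = n + (-n) % k := by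
  rw [ceil_intCast_div_intCast n hk, Int.emod_def]
  ring

theorem ceil_add_div_mul_sub_mem_Icc {a b k x : ℤ} (hk : 0 < k) (hab : a ≤ b)
    (hnomult : ¬ ∃ j : ℤ, a ≤ j * k ∧ j * k ≤ b)
    (ha : a % k ≤ (-x) % k) (hb : (-x) % k ≤ b % k) :
    ⌈((a + x : ℤ) : α) / k⌉ * k - x ∈ Set.Icc a b := by
  have heq : ⌈((a + x : ℤ) : α) / k⌉ * k - x = a + ((-x) % k - a % k) := by
    have hneg : -(a + x) = -x - a := by ring
    rw [ceil_intCast_div_intCast_mul _ hk.le, hneg, sub_emod_of_emod_le_emod ha]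
    ring
  have hwidth : b % k - a % k = b - a := by
    rw [Int.emod_def, Int.emod_def, ediv_eq_ediv_of_not_exists_mul hk hab hnomult]
    ring
  rw [heq, Set.mem_Icc]
  constructor <;> linarith

theorem case_e_backward_general {p K L R i : ℤ} (hK : 0 < K)
    (hL : 0 ≤ L) (hLR : L ≤ R) (hR : R < p)
    (hnomult : ¬ ∃ j : ℤ, L ≤ j * K ∧ j * K ≤ R)
    (h1 : L % K ≤ (-(p * i)) % K) (h2 : (-(p * i)) % K ≤ R % K) :
    L ≤ ⌈((L + p * i : ℤ) : α) / K⌉ * K - i * p ∧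
    ⌈((L + p * i : ℤ) : α) / K⌉ * K - i * p ≤ R ∧
    (⌈((L + p * i : ℤ) : α) / K⌉ * K) % p = ⌈((L + p * i : ℤ) : α) / K⌉ * K - i * p := by
  obtain ⟨hlow, hupp⟩ := ceil_add_div_mul_sub_mem_Icc (α := α) hK hLR hnomult h1 h2
  rw [mul_comm i p]
  refine ⟨hlow, hupp, ?_⟩
  rw [← Int.sub_mul_emod_self_left _ p i]
  exact Int.emod_eq_of_lt (hL.trans hlow) (hupp.trans_lt hR)

end Ceil

/-- Backward direction of case (e) of Equation 8: if `i ≥ 0` solves the reduced problem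
`L % K ≤ (-p*i) % K ≤ R % K` and no multiple of `K` lies in `[L, R]`, then
`m = ⌈(L + p*i)/K⌉` satisfies `L ≤ m*K - i*p ≤ R` and `(m*K) % p = m*K - i*p`. -/
theorem case_e_backward (p K L R : ℤ) (hcop : IsCoprime p K) (hK1 : 1 ≤ K) (hKp : K < p)
    (hL : 0 ≤ L) (hLR : L ≤ R) (hR : R < p)
    (hnomult : ¬ ∃ j : ℤ, L ≤ j * K ∧ j * K ≤ R)
    (i : ℤ) (hi : 0 ≤ i) (h1 : L % K ≤ (-(p * i)) % K) (h2 : (-(p * i)) % K ≤ R % K) :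
    L ≤ ⌈((L + p * i : ℤ) : ℚ) / K⌉ * K - i * p ∧
    ⌈((L + p * i : ℤ) : ℚ) / K⌉ * K - i * p ≤ R ∧
    (⌈((L + p * i : ℤ) : ℚ) / K⌉ * K) % p = ⌈((L + p * i : ℤ) : ℚ) / K⌉ * K - i * p :=
  case_e_backward_general hK1 hL hLR hR hnomult h1 h2
end

section
/- Let p, K, L, R be integers with 1 ≤ K < p, 0 ≤ L ≤ R < p, and R − L < K. If m₁ < m₂ are nonnegative integers both satisfying L ≤ (m·K) mod p ≤ R, then ⌊m₁·K / p⌋ < ⌊m₂·K / p⌋. -/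
theorem ediv_lt_ediv_iff_emod_sub_emod_lt {p : ℤ} (hp : 0 < p) (a b : ℤ) :
    a / p < b / p ↔ b % p - a % p < b - a := by
  have hsub : b - a - (b % p - a % p) = p * (b / p - a / p) := by
    linear_combination -Int.emod_add_mul_ediv b p + Int.emod_add_mul_ediv a p
  rw [← sub_pos, ← mul_pos_iff_of_pos_left hp, ← hsub, sub_pos]

theorem case_e_monotone_general {p K L R : ℤ} (hp : 0 < p) (hRLK : R - L < K) :
    StrictMonoOn (fun m : ℤ ↦ m * K / p) {m | m * K % p ∈ Set.Icc L R} := by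
  rintro m₁ ⟨h₁L, h₁R⟩ m₂ ⟨_, h₂R⟩ hlt
  have hK : 0 ≤ K := (sub_nonneg.2 (h₁L.trans h₁R)).trans hRLK.le
  refine (ediv_lt_ediv_iff_emod_sub_emod_lt hp _ _).2 ?_
  calc
    m₂ * K % p - m₁ * K % p ≤ R - L := sub_le_sub h₂R h₁L
    _ < K := hRLK
    _ ≤ (m₂ - m₁) * K := le_mul_of_one_le_left hK (Int.sub_pos_of_lt hlt)
    _ = m₂ * K - m₁ * K := sub_mul _ _ _

/-- If `R - L < K` then the map `m ↦ ⌊m*K/p⌋` is strictly increasing on solutions of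
`L ≤ (m*K) % p ≤ R`. -/
theorem case_e_monotone (p K L R : ℤ) (hK1 : 1 ≤ K) (hKp : K < p)
    (hL : 0 ≤ L) (hLR : L ≤ R) (hR : R < p) (hRLK : R - L < K)
    (m₁ m₂ : ℤ) (hm₁ : 0 ≤ m₁) (hlt : m₁ < m₂)
    (h₁L : L ≤ (m₁ * K) % p) (h₁R : (m₁ * K) % p ≤ R)
    (h₂L : L ≤ (m₂ * K) % p) (h₂R : (m₂ * K) % p ≤ R) :
    m₁ * K / p < m₂ * K / p :=
  case_e_monotone_general (by linarith) hRLK ⟨h₁L, h₁R⟩ ⟨h₂L, h₂R⟩ hlt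
end

section
/- Let p, K be coprime integers with 1 ≤ K < p, and let L, R be integers with 0 < L ≤ R < p such that no multiple of K lies in the interval [L, R]. Suppose i₀ is the least positive integer i such that L mod K ≤ (−p·i) mod K ≤ R mod K, and such an i exists. Then m₀ = ⌈(L + p·i₀)/K⌉ is the least positive integer m satisfying L ≤ (m·K) mod p ≤ R. -/
/-!
A solution `m` of `L ≤ (m * K) % p ≤ R` is one for which `m * K` lies in a translate
`[L + p * i, R + p * i]`, and here `i > 0` because `[L, R]` itself contains no multiple of `K`.
As `[L, R]` lies strictly between consecutive multiples of `K`, reduction modulo `K` maps it onto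
`[L % K, R % K]`, so the `i`-th translate contains a multiple of `K` exactly when `i` solves the
reduced problem. The left endpoints increase with `i`, so the least multiple of `K` in the union of
the translates is the first multiple past the left endpoint of the first translate that has one.
-/

open Set

lemma isLeast_exists_mem_Icc {ι α β : Type*} [Preorder ι] [Preorder α] [Preorder β]
    {f : α → β} {l r : ι → β} {s : Set ι} {i₀ : ι} {m₀ : α} (hf : Monotone f) (hl : Monotone l)
    (hi₀ : IsLeast {i | i ∈ s ∧ ∃ m, f m ∈ Icc (l i) (r i)} i₀)
    (hm₀ : IsLeast {m | l i₀ ≤ f m} m₀) :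
    IsLeast {m | ∃ i ∈ s, f m ∈ Icc (l i) (r i)} m₀ := by
  obtain ⟨⟨hi₀s, m₁, hlm₁, hm₁r⟩, hi₀min⟩ := hi₀
  refine ⟨⟨i₀, hi₀s, hm₀.1, (hf (hm₀.2 hlm₁)).trans hm₁r⟩, ?_⟩
  rintro m ⟨i, his, hm⟩
  exact hm₀.2 ((hl (hi₀min ⟨his, m, hm⟩)).trans hm.1)

lemma isLeast_ceil_div {k : Type*} [Field k] [LinearOrder k] [IsStrictOrderedRing k] [FloorRing k]
    {K : ℤ} (hK : 0 < K) (a : ℤ) : IsLeast {m : ℤ | a ≤ m * K} ⌈(a : k) / K⌉ := by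
  have ceil_le_iff (m : ℤ) : ⌈(a : k) / K⌉ ≤ m ↔ a ≤ m * K := by
    rw [Int.ceil_le, div_le_iff₀ (Int.cast_pos.2 hK)]
    exact_mod_cast Iff.rfl
  exact ⟨(ceil_le_iff _).1 le_rfl, fun m hm ↦ (ceil_le_iff m).2 hm⟩

lemma emod_mem_Icc_iff {L R p : ℤ} (hL : 0 ≤ L) (hR : R < p) (n : ℤ) :
    n % p ∈ Icc L R ↔ ∃ i, n ∈ Icc (L + p * i) (R + p * i) := by
  constructor
  · rintro ⟨hLn, hnR⟩
    have hn := Int.emod_add_mul_ediv n p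
    exact ⟨n / p, by linarith, by linarith⟩
  · rintro ⟨i, hLn, hnR⟩
    have hmod : n % p = n - p * i := by
      rw [← Int.sub_mul_emod_self_left n p i]
      exact Int.emod_eq_of_lt (by linarith) (by linarith)
    rw [hmod]
    exact ⟨by linarith, by linarith⟩

section NoMultiple

variable {K L R : ℤ}

lemma ediv_eq_of_mem_Icc (hK : 0 < K) (hfree : ∀ j : ℤ, j * K ∉ Icc L R)
    {s : ℤ} (hs : s ∈ Icc L R) : s / K = L / K := by
  refine le_antisymm (not_lt.1 fun hlt ↦ ?_) (Int.ediv_le_ediv hK hs.1)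
  have hL : L < s / K * K := (Int.ediv_lt_iff_lt_mul hK).1 hlt
  exact hfree (s / K) ⟨hL.le, (Int.ediv_mul_le s hK.ne').trans hs.2⟩

lemma image_emod_Icc (hK : 0 < K) (hfree : ∀ j : ℤ, j * K ∉ Icc L R) (hLR : L ≤ R) :
    (· % K) '' Icc L R = Icc (L % K) (R % K) := by
  have hL := Int.emod_add_mul_ediv L K
  have hR := Int.emod_add_mul_ediv R K
  rw [ediv_eq_of_mem_Icc hK hfree (right_mem_Icc.2 hLR)] at hR
  apply Subset.antisymm
  · rintro _ ⟨s, hs, rfl⟩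
    have hsK := Int.emod_add_mul_ediv s K
    rw [ediv_eq_of_mem_Icc hK hfree hs] at hsK
    exact ⟨by linarith [hs.1], by linarith [hs.2]⟩
  · rintro t ⟨hLt, htR⟩
    refine ⟨t + K * (L / K), ⟨by linarith, by linarith⟩, ?_⟩
    have ht : 0 ≤ t := (Int.emod_nonneg L hK.ne').trans hLt
    have htK : t < K := htR.trans_lt (Int.emod_lt_of_pos R hK)
    simp only [Int.add_mul_emod_self_left, Int.emod_eq_of_lt ht htK]

lemma neg_emod_mem_Icc_iff (hK : 0 < K) (hfree : ∀ j : ℤ, j * K ∉ Icc L R)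
    (hLR : L ≤ R) (a : ℤ) :
    -a % K ∈ Icc (L % K) (R % K) ↔ ∃ m, m * K ∈ Icc (L + a) (R + a) := by
  rw [← image_emod_Icc hK hfree hLR]
  constructor
  · rintro ⟨s, ⟨hLs, hsR⟩, hs⟩
    obtain ⟨m, hm⟩ : K ∣ s - -a := (Int.ModEq.symm hs).dvd
    exact ⟨m, by linarith, by linarith⟩
  · rintro ⟨m, hLm, hmR⟩
    refine ⟨-a + m * K, ⟨by linarith, by linarith⟩, ?_⟩
    exact Int.add_mul_emod_self_right (-a) m K

lemma pos_and_mul_emod_mem_Icc_iff (hK : 0 < K) (hfree : ∀ j : ℤ, j * K ∉ Icc L R)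
    {p : ℤ} (hL : 0 ≤ L) (hR : R < p) (m : ℤ) :
    0 < m ∧ m * K % p ∈ Icc L R ↔ ∃ i > 0, m * K ∈ Icc (L + p * i) (R + p * i) := by
  rw [emod_mem_Icc_iff hL hR]
  constructor
  · rintro ⟨hm, i, hi⟩
    have hi_ne : i ≠ 0 := by
      rintro rfl
      exact hfree m (by simpa only [mul_zero, add_zero] using hi)
    have hp : 0 < p := by linarith [hi.1, hi.2]
    have hi_succ_pos : 0 < i + 1 := by
      have hmK : 0 < m * K := mul_pos hm hK
      exact pos_of_mul_pos_right (by linarith [hi.2] : 0 < p * (i + 1)) hp.le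
    exact ⟨i, by omega, hi⟩
  · rintro ⟨i, hi_pos, hi⟩
    have hp : 0 < p := by linarith [hi.1, hi.2]
    have hpi : 0 < p * i := mul_pos hp hi_pos
    exact ⟨pos_of_mul_pos_left (by linarith [hi.1] : 0 < m * K) hK.le, i, hi⟩

end NoMultiple

theorem case_e_correct_general (p K L R : ℤ) (hK : 0 < K) (hL : 0 < L) (hLR : L ≤ R) (hR : R < p)
    (hnomult : ¬ ∃ j : ℤ, L ≤ j * K ∧ j * K ≤ R)
    (i₀ : ℤ)
    (hi₀ : IsLeast {i : ℤ | 0 < i ∧ L % K ≤ (-(p * i)) % K ∧ (-(p * i)) % K ≤ R % K} i₀) :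
    IsLeast {m : ℤ | 0 < m ∧ L ≤ (m * K) % p ∧ (m * K) % p ≤ R}
      ⌈((L + p * i₀ : ℤ) : ℚ) / K⌉ := by
  have hfree : ∀ j : ℤ, j * K ∉ Icc L R := not_exists.1 hnomult
  simp only [← mem_Icc, neg_emod_mem_Icc_iff hK hfree hLR] at hi₀
  simp only [← mem_Icc, pos_and_mul_emod_mem_Icc_iff hK hfree hL.le hR]
  have hp : 0 ≤ p := by linarith
  have hmul : Monotone fun m : ℤ ↦ m * K := monotone_mul_right_of_nonneg hK.le
  have hleft : Monotone fun i : ℤ ↦ L + p * i := (monotone_mul_left_of_nonneg hp).const_add L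
  exact isLeast_exists_mem_Icc (s := Ioi 0) (r := fun i ↦ R + p * i) hmul hleft hi₀
    (isLeast_ceil_div hK _)

/-- Full correctness of case (e) of Equation 8: if `i₀` is the least positive solution
of the reduced problem `L % K ≤ (-p*i) % K ≤ R % K`, then `m₀ = ⌈(L + p*i₀)/K⌉` is the
least positive integer `m` with `L ≤ (m*K) % p ≤ R`. -/
theorem case_e_correct (p K L R : ℤ) (hcop : IsCoprime p K) (hK1 : 1 ≤ K) (hKp : K < p)
    (hL : 0 < L) (hLR : L ≤ R) (hR : R < p)
    (hnomult : ¬ ∃ j : ℤ, L ≤ j * K ∧ j * K ≤ R)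
    (i₀ : ℤ)
    (hi₀ : IsLeast {i : ℤ | 0 < i ∧ L % K ≤ (-(p * i)) % K ∧ (-(p * i)) % K ≤ R % K} i₀) :
    IsLeast {m : ℤ | 0 < m ∧ L ≤ (m * K) % p ∧ (m * K) % p ≤ R}
      ⌈((L + p * i₀ : ℤ) : ℚ) / K⌉ :=
  case_e_correct_general p K L R hK1 hL hLR hR hnomult i₀ hi₀
end
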